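/- arXiv:0708.0048 — 6 statements merged into one kernel-verified Lean document; each statement's English description precedes it below -/
import Mathlib

section
/- Let α ∈ (0,1) be irrational with continued fraction expansion α = [a_1, a_2, …]. For every k ≥ 0, the quantity t_k equals either a_1 + 1 or a_1; more precisely, t_k = a_1 + 1 if {r_k α} < f_1 = 1 − a_1 α, and t_k = a_1 if {r_k α} > f_1. -/
open Filter Finset

noncomputable section

/-- The Gauss map `G(x) = {1/x}` (with `G(0) = 0`, since `0⁻¹ = 0` in Lean). -/
def gaussMap (x : ℝ) : ℝ := Int.fract x⁻¹

/-- `α_m = G^m(α)`. -/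
def gaussIter (α : ℝ) (m : ℕ) : ℝ := gaussMap^[m] α

/-- The `h`-th partial quotient `a_h` of `α` (meaningful for `h ≥ 1`):
`a_h = ⌊(G^{h-1} α)⁻¹⌋`. -/
def pq (α : ℝ) (h : ℕ) : ℕ := ⌊(gaussIter α (h - 1))⁻¹⌋₊

/-- Denominators `q_n` of the convergents of `α`:
`q_0 = 1`, `q_1 = a_1`, `q_{n+2} = a_{n+2} q_{n+1} + q_n`. -/
def qden (α : ℝ) : ℕ → ℕ
  | 0 => 1
  | 1 => pq α 1
  | (n + 2) => pq α (n + 2) * qden α (n + 1) + qden α n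

/-- Numerators `p_n` of the convergents of `α`:
`p_0 = 0`, `p_1 = 1`, `p_{n+2} = a_{n+2} p_{n+1} + p_n`. -/
def pnum (α : ℝ) : ℕ → ℕ
  | 0 => 0
  | 1 => 1
  | (n + 2) => pq α (n + 2) * pnum α (n + 1) + pnum α n

/-- `f_n = (-1)^n (q_n α - p_n)`. -/
def fseq (α : ℝ) (n : ℕ) : ℝ := (-1) ^ n * ((qden α n : ℝ) * α - (pnum α n : ℝ))

/-- `r_k = min {r ≥ 0 : ⌊r α⌋ = k}`. -/
def rmin (α : ℝ) (k : ℕ) : ℕ := sInf {r : ℕ | ⌊(r : ℝ) * α⌋ = (k : ℤ)}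

/-- `t_k = #{r ≥ 0 : ⌊r α⌋ = k}`. -/
def tcount (α : ℝ) (k : ℕ) : ℕ := Set.ncard {r : ℕ | ⌊(r : ℝ) * α⌋ = (k : ℤ)}

/-- `(k_j)_{j ≥ 0}`: the increasing enumeration of `{k : t_k = a_1 + 1}`. -/
def kseq (α : ℝ) (j : ℕ) : ℕ := Nat.nth (fun k => tcount α k = pq α 1 + 1) j

/-- The gaps `g_j = r_{k_j} - r_{k_{j-1}}` (for `j ≥ 1`). -/
def gseq (γ : ℝ) (j : ℕ) : ℕ := rmin γ (kseq γ j) - rmin γ (kseq γ (j - 1))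

/-- `(j_h)_{h ≥ 0}`: the increasing enumeration of those `j ≥ 1` with
`g_j = q_2 + q_1`. -/
def jbig (γ : ℝ) (h : ℕ) : ℕ :=
  Nat.nth (fun j => 1 ≤ j ∧ gseq γ j = qden γ 2 + qden γ 1) h

/-- `ᾱ_1 = G(α)/(1 - G(α))`. -/
def abar (α : ℝ) : ℝ := gaussIter α 1 / (1 - gaussIter α 1)

/-- The Ostrowski representation `r = ∑_{h=0}^N c_h q_h` with `0 ≤ c_h ≤ a_{h+1}`,
`c_{h-1} = 0` whenever `c_h = a_{h+1}`, and `c_N > 0`; `N = ord r`. -/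
def IsOstrowski (α : ℝ) (r N : ℕ) (c : ℕ → ℕ) : Prop :=
  r = ∑ h ∈ Finset.range (N + 1), c h * qden α h ∧
  (∀ h, c h ≤ pq α (h + 1)) ∧
  (∀ h, c (h + 1) = pq α (h + 2) → c h = 0) ∧
  0 < c N ∧ ∀ h, N < h → c h = 0

/-- The order `ord r` of a positive integer `r`. -/
def ordOst (α : ℝ) (r : ℕ) : ℕ := sInf {N | ∃ c, IsOstrowski α r N c}

/-- `s(y) = 2 χ_{[0,1/2)}({y}) - 1`. -/
def sfun (y : ℝ) : ℝ := if Int.fract y < 1 / 2 then 1 else -1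

/-- `S_n(α, β) = ∑_{r=0}^n s({r α + β})`. -/
def Sgen (α β : ℝ) (n : ℕ) : ℝ := ∑ r ∈ Finset.range (n + 1), sfun ((r : ℝ) * α + β)

/-- `S_n(α) = S_n(α, 0)`. -/
def Ssum (α : ℝ) (n : ℕ) : ℝ := Sgen α 0 n

/-- `max_{0 ≤ n ≤ r} S_n(α)`. -/
def maxS (α : ℝ) (r : ℕ) : ℝ := sSup (Ssum α '' Set.Iic r)

/-- `min_{0 ≤ n ≤ r} S_n(α)`. -/
def minS (α : ℝ) (r : ℕ) : ℝ := sInf (Ssum α '' Set.Iic r)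

/-- `d_n(α, β) = ∑_{r=0}^{n-1} χ_{[0,β)}({r α}) - β n`. -/
def ddisc (α β : ℝ) (n : ℕ) : ℝ :=
  (∑ r ∈ Finset.range n, if Int.fract ((r : ℝ) * α) < β then (1 : ℝ) else 0) - β * n

/-- `j(r) = max {j + sgn R₁ - 1, 0}` from the decomposition `r = r_{k_j} + R₁ q₁ + R₀`. -/
def jfun (j R1 : ℕ) : ℕ := if R1 = 0 then j - 1 else j

/-- `i(r) = k_j - j + max {R₁ - 1, 0}` from the decomposition `r = r_{k_j} + R₁ q₁ + R₀`. -/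
def ifun (α : ℝ) (j R1 : ℕ) : ℕ := kseq α j - j + (R1 - 1)

/-- `S̃(r)` from the decomposition `r = r_{k_j} + R₁ q₁ + R₀`. -/
def Stil (α : ℝ) (r R1 R0 : ℕ) : ℝ :=
  if R0 = 0 then (if R1 = 0 then sfun ((r : ℝ) * α) else 0)
  else if R1 = 0 then ∑ i ∈ Finset.Icc (r - R0) r, sfun ((i : ℝ) * α)
  else ∑ i ∈ Finset.Icc (r - R0 + 1) r, sfun ((i : ℝ) * α)

/-- `sup_{β ∈ (0,1)} |d_n(α, β)| = n D_n^*(α)`. -/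
def nDsup (α : ℝ) (n : ℕ) : ℝ := sSup ((fun β => |ddisc α β n|) '' Set.Ioo (0 : ℝ) 1)

/-- The discrepancy `D_n^*(α) = sup_{β ∈ (0,1)} |d_n(α, β)| / n`. -/
def Dstar (α : ℝ) (n : ℕ) : ℝ :=
  sSup ((fun β => |ddisc α β n| / (n : ℝ)) '' Set.Ioo (0 : ℝ) 1)

/-- for every `k ≥ 0`, `t_k ∈ {a_1, a_1 + 1}`; more precisely
`t_k = a_1 + 1` if `{r_k α} < f_1 = 1 - a_1 α` and `t_k = a_1` if `{r_k α} > f_1`. -/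
theorem tcount_eq (α : ℝ) (hirr : Irrational α) (h0 : 0 < α) (h1 : α < 1) (k : ℕ) :
    (tcount α k = pq α 1 + 1 ∨ tcount α k = pq α 1) ∧
    (Int.fract ((rmin α k : ℝ) * α) < fseq α 1 → tcount α k = pq α 1 + 1) ∧
    (fseq α 1 < Int.fract ((rmin α k : ℝ) * α) → tcount α k = pq α 1) := by
  have hx1 : (pq α 1 : ℝ) * α ≤ 1 := by
    have h : (pq α 1 : ℝ) ≤ α⁻¹ := by
      simpa [pq, gaussIter] using Nat.floor_le (inv_nonneg.mpr h0.le)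
    calc (pq α 1 : ℝ) * α ≤ α⁻¹ * α := mul_le_mul_of_nonneg_right h h0.le
      _ = 1 := inv_mul_cancel₀ h0.ne'
  have hx2 : 1 < ((pq α 1 : ℝ) + 1) * α := by
    have h : α⁻¹ < (pq α 1 : ℝ) + 1 := by
      simpa [pq, gaussIter] using Nat.lt_floor_add_one (α⁻¹)
    calc 1 = α⁻¹ * α := (inv_mul_cancel₀ h0.ne').symm
      _ < _ := mul_lt_mul_of_pos_right h h0
  have hf : fseq α 1 = 1 - (pq α 1 : ℝ) * α := by
    simp [fseq, qden, pnum]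
  have hmem : ∀ n : ℕ, ⌊(n : ℝ) * α⌋ = (k : ℤ) ↔ (k : ℝ) ≤ n * α ∧ (n : ℝ) * α < k + 1 := by
    intro n
    rw [Int.floor_eq_iff]
    simp
  have hceil1 : (k : ℝ) ≤ (⌈(k : ℝ) / α⌉₊ : ℝ) * α := by
    have := Nat.le_ceil ((k : ℝ) / α)
    rwa [div_le_iff₀ h0] at this
  have hceil2 : (⌈(k : ℝ) / α⌉₊ : ℝ) * α < k + α := by
    have := Nat.ceil_lt_add_one (show 0 ≤ (k : ℝ) / α by positivity)
    have h2 := mul_lt_mul_of_pos_right this h0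
    rwa [add_mul, div_mul_cancel₀ _ h0.ne', one_mul] at h2
  have hge : ∀ n : ℕ, (k : ℝ) ≤ n * α ↔ ⌈(k : ℝ) / α⌉₊ ≤ n := by
    intro n
    rw [Nat.ceil_le, div_le_iff₀ h0]
  have hr : rmin α k = ⌈(k : ℝ) / α⌉₊ := by
    apply le_antisymm
    · exact Nat.sInf_le ((hmem _).2 ⟨hceil1, by linarith⟩)
    · have hne : {r : ℕ | ⌊(r : ℝ) * α⌋ = (k : ℤ)}.Nonempty :=
        ⟨_, (hmem _).2 ⟨hceil1, by linarith⟩⟩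
      exact (hge _).1 ((hmem _).1 (Nat.sInf_mem hne)).1
  rw [← hr] at hceil1 hceil2
  simp only [← hr] at hge
  have hfl : ⌊(rmin α k : ℝ) * α⌋ = (k : ℤ) := (hmem _).2 ⟨hceil1, by linarith⟩
  have hfr : Int.fract ((rmin α k : ℝ) * α) = (rmin α k : ℝ) * α - k := by
    rw [Int.fract, hfl]
    simp
  have key : ∀ m : ℕ, (∀ n : ℕ, (n : ℝ) * α < k + 1 ↔ n < rmin α k + m) → tcount α k = m := by
    intro m hm
    have : {r : ℕ | ⌊(r : ℝ) * α⌋ = (k : ℤ)} =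
        ((Finset.Ico (rmin α k) (rmin α k + m) : Finset ℕ) : Set ℕ) := by
      ext n
      simp [hmem, hge, hm]
    rw [tcount, this, Set.ncard_coe_finset]
    simp
  have cA : Int.fract ((rmin α k : ℝ) * α) < fseq α 1 → tcount α k = pq α 1 + 1 := by
    intro h
    rw [hf, hfr] at h
    apply key
    intro n
    constructor
    · intro hn
      by_contra hc
      have : ((rmin α k + (pq α 1 + 1) : ℕ) : ℝ) ≤ n := by exact_mod_cast not_lt.1 hc
      push_cast at this
      nlinarith
    · intro hn
      have : (n : ℝ) ≤ ((rmin α k + pq α 1 : ℕ) : ℝ) := by exact_mod_cast (by omega)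
      push_cast at this
      nlinarith
  have cB : fseq α 1 ≤ Int.fract ((rmin α k : ℝ) * α) → tcount α k = pq α 1 := by
    intro h
    rw [hf, hfr] at h
    apply key
    intro n
    constructor
    · intro hn
      by_contra hc
      have : ((rmin α k + pq α 1 : ℕ) : ℝ) ≤ n := by exact_mod_cast not_lt.1 hc
      push_cast at this
      nlinarith
    · intro hn
      have : (n : ℝ) + 1 ≤ ((rmin α k + pq α 1 : ℕ) : ℝ) := by exact_mod_cast hn
      push_cast at this
      nlinarith
  refine ⟨?_, cA, fun h => cB h.le⟩
  rcases lt_or_ge (Int.fract ((rmin α k : ℝ) * α)) (fseq α 1) with h | h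
  · exact Or.inl (cA h)
  · exact Or.inr (cB h)
end
end

section
/- Let α ∈ (0,1) be irrational. For every m ≥ 0 and every j ≥ 1, the gap g_j^{(m)} = r_{k_j}^{(m)} − r_{k_{j−1}}^{(m)} equals q_2^{(m)} if {(j−1) α_{m+2}} < 1 − α_{m+2}, and equals q_2^{(m)} + q_1^{(m)} otherwise. -/
open Filter Finset

noncomputable section

lemma aux_set (γ β : ℝ) (a : ℕ) (h0 : 0 < γ) (hβ : 0 ≤ β) (hab : γ⁻¹ = a + β) (k : ℕ) :
    {r : ℕ | ⌊(r : ℝ) * γ⌋ = (k : ℤ)} =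
      Set.Ico (k * a + ⌈(k : ℝ) * β⌉₊) ((k + 1) * a + ⌈((k : ℝ) + 1) * β⌉₊) := by
  have key : ∀ k r : ℕ, k * a + ⌈(k : ℝ) * β⌉₊ ≤ r ↔ (k : ℝ) ≤ r * γ := by
    intro k r
    have e : k * a + ⌈(k : ℝ) * β⌉₊ = ⌈(k : ℝ) * γ⁻¹⌉₊ := by
      rw [hab, mul_add, add_comm _ (⌈_⌉₊), add_comm ((k : ℝ) * a)]
      have := Nat.ceil_add_natCast (R := ℝ) (a := (k : ℝ) * β) (by positivity) (k * a)
      push_cast at this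
      rw [this]
    rw [e, Nat.ceil_le, ← div_eq_mul_inv, div_le_iff₀ h0]
  ext r
  have h2 := key (k + 1) r
  push_cast at h2
  simp only [Set.mem_ofPred_eq, Set.mem_Ico, Int.floor_eq_iff]
  rw [key k r, ← not_le (a := (k + 1) * a + _), h2, not_le]
  simp

lemma aux_irr {x : ℝ} (h : Irrational x) : Irrational (gaussMap x) ∧ 0 < gaussMap x
    ∧ gaussMap x < 1 := by
  have h1 : Irrational (gaussMap x) := by
    unfold gaussMap Int.fract
    exact (irrational_inv_iff.mpr h).sub_intCast _
  exact ⟨h1, lt_of_le_of_ne (Int.fract_nonneg _) (h1.ne_zero).symm, Int.fract_lt_one _⟩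

lemma aux_inv {x : ℝ} (h : 0 < x) : x⁻¹ = (⌊x⁻¹⌋₊ : ℝ) + gaussMap x := by
  unfold gaussMap
  have h3 : ((⌊x⁻¹⌋₊ : ℤ)) = ⌊x⁻¹⌋ := Int.natCast_floor_eq_floor (by positivity)
  have : ((⌊x⁻¹⌋₊ : ℕ) : ℝ) = (⌊x⁻¹⌋ : ℝ) := by exact_mod_cast congrArg (Int.cast : ℤ → ℝ) h3
  rw [this, Int.floor_add_fract]

lemma aux_iter {α : ℝ} (h : Irrational α) (h0 : 0 < α) (h1 : α < 1) (m : ℕ) :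
    Irrational (gaussIter α m) ∧ 0 < gaussIter α m ∧ gaussIter α m < 1 := by
  induction m with
  | zero => exact ⟨h, h0, h1⟩
  | succ n ih =>
    unfold gaussIter at *
    rw [Function.iterate_succ_apply']
    exact aux_irr ih.1

lemma aux_kseq (γ β : ℝ) (a : ℕ) (h0 : 0 < γ) (ha : 1 ≤ a) (hβ : 0 < β) (hβ1 : β < 1)
    (hab : γ⁻¹ = a + β) (hpq : pq γ 1 = a) (j : ℕ) :
    kseq γ j = ⌊(j : ℝ) / β⌋₊ ∧ rmin γ (kseq γ j) = ⌊(j : ℝ) / β⌋₊ * a + j := by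
  have hC : ∀ k : ℕ, ⌈(k : ℝ) * β⌉₊ ≤ ⌈((k : ℝ) + 1) * β⌉₊ := fun k =>
    Nat.ceil_mono (by nlinarith)
  have hC1 : ∀ k : ℕ, ⌈((k : ℝ) + 1) * β⌉₊ ≤ ⌈(k : ℝ) * β⌉₊ + 1 := fun k => by
    rw [Nat.ceil_le]
    push_cast
    have := Nat.le_ceil ((k : ℝ) * β)
    nlinarith
  have ht : ∀ k : ℕ, tcount γ k = pq γ 1 + 1 ↔ ⌈((k : ℝ) + 1) * β⌉₊ = ⌈(k : ℝ) * β⌉₊ + 1 := by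
    intro k
    unfold tcount
    rw [aux_set γ β a h0 hβ.le hab k, hpq, ← Finset.coe_Ico, Set.ncard_coe_finset, Nat.card_Ico]
    have := hC k
    have := hC1 k
    have e : (k + 1) * a = k * a + a := by ring
    omega
  have hr : ∀ k : ℕ, rmin γ k = k * a + ⌈(k : ℝ) * β⌉₊ := by
    intro k
    unfold rmin
    rw [aux_set γ β a h0 hβ.le hab k]
    apply csInf_Ico
    have := hC k
    have e : (k + 1) * a = k * a + a := by ring
    omega
  classical
  have hcount : ∀ k : ℕ, Nat.count (fun k => tcount γ k = pq γ 1 + 1) k = ⌈(k : ℝ) * β⌉₊ := by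
    intro k
    induction k with
    | zero => simp
    | succ n ih =>
      rw [Nat.count_succ, ih]
      have := hC n
      have := hC1 n
      have := ht n
      push_cast
      split_ifs with h
      · omega
      · have : ¬ (⌈((n : ℝ) + 1) * β⌉₊ = ⌈(n : ℝ) * β⌉₊ + 1) := fun h' => h ((ht n).2 h')
        omega
  set K := ⌊(j : ℝ) / β⌋₊ with hK
  have l1 : (K : ℝ) * β ≤ j := by
    rw [← le_div_iff₀ hβ]
    exact Nat.floor_le (by positivity)
  have l2 : (j : ℝ) < ((K : ℝ) + 1) * β := by
    rw [← div_lt_iff₀ hβ]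
    exact Nat.lt_floor_add_one _
  have c1 : ⌈(K : ℝ) * β⌉₊ = j := by
    apply le_antisymm (Nat.ceil_le.2 l1)
    have : (j : ℝ) < (⌈(K : ℝ) * β⌉₊ : ℝ) + 1 := by
      have := Nat.le_ceil ((K : ℝ) * β)
      nlinarith
    have : j < ⌈(K : ℝ) * β⌉₊ + 1 := by exact_mod_cast this
    omega
  have c2 : ⌈((K : ℝ) + 1) * β⌉₊ = j + 1 := by
    have := Nat.lt_ceil.2 l2
    have := hC1 K
    omega
  have hk : kseq γ j = K := by
    unfold kseq
    have h := Nat.nth_count (p := fun k => tcount γ k = pq γ 1 + 1) (n := K)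
      ((ht K).2 (by rw [c1, c2]))
    rwa [hcount, c1] at h
  exact ⟨hk, by rw [hk, hr, c1]⟩

/-- for every `m ≥ 0` and `j ≥ 1`, the gap
`g_j^{(m)} = r_{k_j}^{(m)} - r_{k_{j-1}}^{(m)}` equals `q_2^{(m)}` if
`{(j-1) α_{m+2}} < 1 - α_{m+2}` and `q_2^{(m)} + q_1^{(m)}` otherwise. -/
theorem gap_eq (α : ℝ) (hirr : Irrational α) (h0 : 0 < α) (h1 : α < 1)
    (m j : ℕ) (hj : 1 ≤ j) :
    (Int.fract (((j : ℝ) - 1) * gaussIter α (m + 2)) < 1 - gaussIter α (m + 2) →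
      gseq (gaussIter α m) j = qden (gaussIter α m) 2) ∧
    (¬ Int.fract (((j : ℝ) - 1) * gaussIter α (m + 2)) < 1 - gaussIter α (m + 2) →
      gseq (gaussIter α m) j = qden (gaussIter α m) 2 + qden (gaussIter α m) 1) := by
  obtain ⟨gi, g0, g1⟩ := aux_iter hirr h0 h1 m
  have e2 : gaussIter α (m + 2) = gaussMap (gaussMap (gaussIter α m)) := by
    unfold gaussIter
    rw [Function.iterate_succ_apply', Function.iterate_succ_apply']
  rw [e2]
  generalize gaussIter α m = γ at *
  obtain ⟨bi, b0, b1⟩ := aux_irr gi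
  have hγ := aux_inv g0
  have hb := aux_inv b0
  obtain ⟨di, d0, d1⟩ := aux_irr bi
  have hq1 : qden γ 1 = pq γ 1 := rfl
  have hq2 : qden γ 2 = pq γ 2 * pq γ 1 + 1 := rfl
  have hp1 : pq γ 1 = ⌊γ⁻¹⌋₊ := rfl
  have hp2 : pq γ 2 = ⌊(gaussMap γ)⁻¹⌋₊ := rfl
  have ha : 1 ≤ pq γ 1 := by
    rw [hp1]
    apply Nat.le_floor
    simpa using (one_le_inv₀ g0).2 g1.le
  rw [← hp1] at hγ
  rw [← hp2] at hb
  have hk := fun i => (aux_kseq γ (gaussMap γ) (pq γ 1) g0 ha b0 b1 hγ rfl i).2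
  rw [hq1, hq2]
  generalize gaussMap (gaussMap γ) = δ at *
  generalize pq γ 1 = a at *
  generalize pq γ 2 = b at *
  obtain ⟨i, rfl⟩ : ∃ i, j = i + 1 := ⟨j - 1, by omega⟩
  have hfl : ∀ i : ℕ, ⌊(i : ℝ) / gaussMap γ⌋₊ = i * b + ⌊(i : ℝ) * δ⌋₊ := by
    intro i
    rw [div_eq_mul_inv, hb, mul_add, add_comm]
    have := Nat.floor_add_natCast (R := ℝ) (a := (i : ℝ) * δ) (by positivity) (i * b)
    push_cast at this
    rw [this, add_comm]
  have hg : gseq γ (i + 1) = ((i + 1) * b + ⌊((i : ℝ) + 1) * δ⌋₊) * a + (i + 1)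
      - ((i * b + ⌊(i : ℝ) * δ⌋₊) * a + i) := by
    unfold gseq
    rw [hk, hk, hfl, hfl, Nat.add_sub_cancel]
    push_cast
    rfl
  have hpos : 0 ≤ (i : ℝ) * δ := by positivity
  have hfr : Int.fract ((i : ℝ) * δ) = i * δ - (⌊(i : ℝ) * δ⌋₊ : ℝ) := by
    have h3 : ((⌊(i : ℝ) * δ⌋₊ : ℤ)) = ⌊(i : ℝ) * δ⌋ := Int.natCast_floor_eq_floor hpos
    unfold Int.fract
    rw [← h3]
    simp
  have hj1 : (((i + 1 : ℕ) : ℝ) - 1) = i := by push_cast; ring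
  rw [hj1, hfr, hg]
  have f1 := Nat.floor_le hpos
  have f2 := Nat.lt_floor_add_one ((i : ℝ) * δ)
  generalize ⌊(i : ℝ) * δ⌋₊ = F at *
  constructor
  · intro h
    have : ⌊((i : ℝ) + 1) * δ⌋₊ = F := by
      rw [Nat.floor_eq_iff (by positivity)]
      constructor <;> nlinarith
    rw [this]
    apply Nat.sub_eq_of_eq_add
    ring
  · intro h
    have : ⌊((i : ℝ) + 1) * δ⌋₊ = F + 1 := by
      rw [Nat.floor_eq_iff (by positivity)]
      push_cast
      constructor <;> nlinarith
    rw [this]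
    apply Nat.sub_eq_of_eq_add
    ring
end
end

section
/- Let α ∈ (0,1) be irrational. A positive integer r satisfies r = r_{k_j} for some j > 0 if and only if in the Ostrowski representation r = Σ_{h=0}^N c_h q_h one has c_0 = c_1 = 0 and the smallest index h with c_h > 0 is an even number ≥ 2. -/
open Filter Finset

noncomputable section

theorem fseq_rec (α : ℝ) (n : ℕ) :
    fseq α n = pq α (n + 2) * fseq α (n + 1) + fseq α (n + 2) := by
  simp only [fseq, qden, pnum]
  push_cast
  ring

theorem fseq_zero (α : ℝ) : fseq α 0 = α := by simp [fseq, qden, pnum]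

theorem fseq_one (α : ℝ) : fseq α 1 = 1 - pq α 1 * α := by
  simp [fseq, qden, pnum]

theorem gaussIter_succ (α : ℝ) (n : ℕ) :
    gaussIter α (n + 1) = Int.fract (gaussIter α n)⁻¹ := by
  simp only [gaussIter, Function.iterate_succ_apply', gaussMap]

theorem gaussIter_prop (α : ℝ) (hirr : Irrational α) (h0 : 0 < α) (h1 : α < 1) (n : ℕ) :
    Irrational (gaussIter α n) ∧ 0 < gaussIter α n ∧ gaussIter α n < 1 := by
  induction n with
  | zero => exact ⟨hirr, h0, h1⟩
  | succ n ih =>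
    obtain ⟨hi, hp, hl⟩ := ih
    rw [gaussIter_succ]
    have hir : Irrational (Int.fract (gaussIter α n)⁻¹) := by
      have := hi.inv
      rw [Int.fract]
      exact this.sub_intCast _
    refine ⟨hir, lt_of_le_of_ne (Int.fract_nonneg _) ?_, Int.fract_lt_one _⟩
    exact fun h => hir.ne_zero h.symm

theorem gaussIter_eq (α : ℝ) (hirr : Irrational α) (h0 : 0 < α) (h1 : α < 1) (n : ℕ) :
    gaussIter α (n + 1) = (gaussIter α n)⁻¹ - pq α (n + 1) := by
  rw [gaussIter_succ, Int.fract, pq]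
  have hp := (gaussIter_prop α hirr h0 h1 n).2.1
  simp only [Nat.add_sub_cancel]
  rw [natCast_floor_eq_intCast_floor (inv_nonneg.2 hp.le)]

theorem fseq_succ (α : ℝ) (hirr : Irrational α) (h0 : 0 < α) (h1 : α < 1) (n : ℕ) :
    fseq α (n + 1) = gaussIter α (n + 1) * fseq α n := by
  induction n with
  | zero =>
    rw [gaussIter_eq α hirr h0 h1, fseq_zero, fseq_one]
    simp only [gaussIter, Function.iterate_zero, id]
    field_simp
    try simp
  | succ n ih =>
    have h := fseq_rec α n
    have hg := (gaussIter_prop α hirr h0 h1 (n + 1)).2.1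
    rw [gaussIter_eq α hirr h0 h1 (n + 1)]
    have : fseq α n = (gaussIter α (n + 1))⁻¹ * fseq α (n + 1) := by
      rw [ih]; field_simp
    rw [sub_mul, ← this]
    linarith

theorem fseq_pos (α : ℝ) (hirr : Irrational α) (h0 : 0 < α) (h1 : α < 1) (n : ℕ) :
    0 < fseq α n := by
  induction n with
  | zero => rw [fseq_zero]; exact h0
  | succ n ih =>
    rw [fseq_succ α hirr h0 h1]
    exact mul_pos (gaussIter_prop α hirr h0 h1 (n + 1)).2.1 ih

theorem fseq_anti (α : ℝ) (hirr : Irrational α) (h0 : 0 < α) (h1 : α < 1) :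
    Antitone (fseq α) := by
  apply antitone_nat_of_succ_le
  intro n
  rw [fseq_succ α hirr h0 h1]
  have h := (gaussIter_prop α hirr h0 h1 (n + 1)).2.2
  have := fseq_pos α hirr h0 h1 n
  nlinarith

theorem pq_one_pos (α : ℝ) (h0 : 0 < α) (h1 : α < 1) : 1 ≤ pq α 1 := by
  simp only [pq, gaussIter, Nat.sub_self, Function.iterate_zero, id]
  exact Nat.le_floor (by simpa using ((one_lt_inv₀ h0).2 h1).le)

/-- The tail of the (signed) Ostrowski sum, normalised to have leading sign `+`. -/
def Utail (α : ℝ) (N : ℕ) (c : ℕ → ℕ) (m : ℕ) : ℝ :=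
  (-1) ^ m * ∑ h ∈ Finset.Ico m (N + 1), (c h : ℝ) * ((-1) ^ h * fseq α h)

theorem Utail_big (α : ℝ) (N : ℕ) (c : ℕ → ℕ) (m : ℕ) (h : N < m) : Utail α N c m = 0 := by
  rw [Utail, Finset.Ico_eq_empty (by omega)]; simp

theorem Utail_rec (α : ℝ) (N : ℕ) (c : ℕ → ℕ) (hc : ∀ h, N < h → c h = 0) (m : ℕ) :
    Utail α N c m = c m * fseq α m - Utail α N c (m + 1) := by
  rcases Nat.lt_or_ge N m with h | h
  · rw [Utail_big _ _ _ _ h, Utail_big _ _ _ _ (by omega), hc m h]; simp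
  · rw [Utail, Utail, Finset.sum_eq_sum_Ico_succ_bot (by omega), mul_add]
    have : ((-1 : ℝ) ^ m) * (-1) ^ m = 1 := by rw [← mul_pow]; simp
    rw [pow_succ]
    linear_combination (c m * fseq α m : ℝ) * this

/-- Upper bound `f_{m-1}`, with `f_{-1} = 1`. -/
def fprev (α : ℝ) (m : ℕ) : ℝ := pq α (m + 1) * fseq α m + fseq α (m + 1)

theorem fprev_zero (α : ℝ) : fprev α 0 = 1 := by
  rw [fprev, fseq_zero, fseq_one]; ring

theorem fprev_succ (α : ℝ) (m : ℕ) : fprev α (m + 1) = fseq α m := (fseq_rec α m).symm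

theorem Utail_bounds (α : ℝ) (hirr : Irrational α) (h0 : 0 < α) (h1 : α < 1)
    (N : ℕ) (c : ℕ → ℕ) (hc : ∀ h, N < h → c h = 0) (hle : ∀ h, c h ≤ pq α (h + 1)) (d : ℕ) :
    ∀ m, N + 1 ≤ m + d → -fseq α m < Utail α N c m ∧ Utail α N c m < fprev α m := by
  induction d with
  | zero =>
    intro m hm
    rw [Utail_big _ _ _ _ (by omega)]
    have h2 := fseq_pos α hirr h0 h1 m
    have h3 := fseq_pos α hirr h0 h1 (m + 1)
    refine ⟨by linarith, ?_⟩
    rw [fprev]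
    positivity
  | succ d ih =>
    intro m hm
    obtain ⟨ha, hb⟩ := ih (m + 1) (by omega)
    rw [fprev_succ] at hb
    rw [Utail_rec α N c hc m, fprev]
    have h2 := fseq_pos α hirr h0 h1 m
    have h4 : (c m : ℝ) ≤ pq α (m + 1) := by exact_mod_cast hle m
    have h5 : (c m : ℝ) * fseq α m ≤ pq α (m + 1) * fseq α m :=
      mul_le_mul_of_nonneg_right h4 h2.le
    have h6 : 0 ≤ (c m : ℝ) * fseq α m := by positivity
    constructor <;> linarith

theorem Utail_zero_eq (α : ℝ) (r N : ℕ) (c : ℕ → ℕ)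
    (hr : r = ∑ h ∈ Finset.range (N + 1), c h * qden α h) :
    (r : ℝ) * α = (∑ h ∈ Finset.range (N + 1), c h * pnum α h : ℕ) + Utail α N c 0 := by
  rw [Utail, hr, ← Finset.range_eq_Ico]
  push_cast
  rw [pow_zero, one_mul, Finset.sum_mul, ← Finset.sum_add_distrib]
  apply Finset.sum_congr rfl
  intro h _
  have : ((-1 : ℝ) ^ h) * (-1) ^ h = 1 := by rw [← mul_pow]; simp
  rw [fseq]
  linear_combination (-(c h : ℝ) * ((qden α h : ℝ) * α - pnum α h)) * this

theorem Utail_zero_of (α : ℝ) (N : ℕ) (c : ℕ → ℕ) (hc : ∀ h, N < h → c h = 0) (m : ℕ)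
    (hm : ∀ h, h < m → c h = 0) : Utail α N c 0 = (-1) ^ m * Utail α N c m := by
  induction m with
  | zero => simp
  | succ m ih =>
    rw [ih (fun h hh => hm h (by omega)), Utail_rec α N c hc m, hm m (by omega), pow_succ]
    push_cast
    ring

/-- The key equivalence in terms of fractional parts. -/
theorem fract_iff (α : ℝ) (hirr : Irrational α) (h0 : 0 < α) (h1 : α < 1)
    (r N : ℕ) (c : ℕ → ℕ) (hOst : IsOstrowski α r N c) :
    Int.fract ((r : ℝ) * α) < fseq α 1 ↔
      (c 0 = 0 ∧ c 1 = 0 ∧ 2 ≤ sInf {h | 0 < c h} ∧ Even (sInf {h | 0 < c h})) := by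
  obtain ⟨hr, hle, hcon, hN, hc⟩ := hOst
  have hb := fun m => Utail_bounds α hirr h0 h1 N c hc hle (N + 1) m (by omega)
  have hne : {h | 0 < c h}.Nonempty := ⟨N, hN⟩
  set m := sInf {h | 0 < c h} with hmdef
  have hm : 0 < c m := Nat.sInf_mem hne
  have hlt : ∀ h, h < m → c h = 0 := by
    intro h hh
    have := Nat.notMem_of_lt_sInf (hmdef ▸ hh)
    simpa using this
  have hU := Utail_zero_of α N c hc m hlt
  have hre := Utail_zero_eq α r N c hr
  set P := ∑ h ∈ Finset.range (N + 1), c h * pnum α h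
  have hfm := fseq_pos α hirr h0 h1 m
  have hf1 := fseq_pos α hirr h0 h1 1
  have hcm : (1 : ℝ) ≤ c m := by exact_mod_cast hm
  have hpos : 0 < Utail α N c m := by
    have h2 := (hb (m + 1)).2
    rw [fprev_succ] at h2
    rw [Utail_rec α N c hc m]
    nlinarith
  have ha1 : (1 : ℝ) ≤ pq α 1 := by exact_mod_cast pq_one_pos α h0 h1
  have hf1e := fseq_one α
  have hf1le : fseq α 1 ≤ 1 - α := by nlinarith
  have hfr : Int.fract ((r : ℝ) * α) = Int.fract (Utail α N c 0) := by
    rw [hre]; exact Int.fract_natCast_add _ _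
  rcases Nat.even_or_odd m with he | ho
  · rw [he.neg_one_pow, one_mul] at hU
    rcases Nat.eq_zero_or_pos m with hm0 | hmp
    · constructor
      · intro h
        exfalso
        rw [hm0] at hm hpos hcm
        have hb0 := (hb 0).2
        rw [fprev_zero] at hb0
        rw [hfr, Int.fract_eq_self.2 ⟨hpos.le, hb0⟩] at h
        have hr0 := Utail_rec α N c hc 0
        have hr1 := Utail_rec α N c hc 1
        have hb2 := (hb 2).1
        have hrec := fseq_rec α 0
        have hlt1 : c 1 + 1 ≤ pq α 2 := by
          have h3 := hle 1
          have h4 := hcon 0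
          simp only [Nat.zero_add] at h4
          rcases Nat.lt_or_ge (c 1) (pq α 2) with h5 | h5
          · exact h5
          · have := h4 (le_antisymm h3 h5); omega
        have hlt1' : (c 1 : ℝ) + 1 ≤ pq α 2 := by exact_mod_cast hlt1
        have hmul := mul_le_mul_of_nonneg_right hlt1' hf1.le
        have hf0 := fseq_pos α hirr h0 h1 0
        have hmul2 := mul_le_mul_of_nonneg_right hcm hf0.le
        simp only [Nat.zero_add, Nat.reduceAdd] at *
        linarith
      · rintro ⟨h, -⟩
        rw [hm0] at hm; omega
    · have hm2 : 2 ≤ m := by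
        obtain ⟨k, hk⟩ := he; omega
      have hlt' : Utail α N c m < fseq α 1 := by
        have h2 := (hb m).2
        obtain ⟨k, hk⟩ : ∃ k, m = k + 1 := ⟨m - 1, by omega⟩
        rw [hk, fprev_succ, ← hk] at h2
        exact lt_of_lt_of_le h2 (fseq_anti α hirr h0 h1 (by omega))
      rw [hfr, hU, Int.fract_eq_self.2 ⟨hpos.le, by linarith⟩]
      exact ⟨fun _ => ⟨hlt 0 (by omega), hlt 1 (by omega), hm2, he⟩, fun _ => hlt'⟩
  · rw [ho.neg_one_pow] at hU
    constructor
    · intro h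
      exfalso
      have hlt' : Utail α N c m < α := by
        have h2 := (hb m).2
        obtain ⟨k, hk⟩ : ∃ k, m = k + 1 := ⟨m - 1, by obtain ⟨k, hk⟩ := ho; omega⟩
        rw [hk, fprev_succ, ← hk] at h2
        have := fseq_anti α hirr h0 h1 (Nat.zero_le k)
        rw [fseq_zero] at this
        linarith
      have : Int.fract (Utail α N c 0) = 1 - Utail α N c m := by
        rw [Int.fract_eq_iff]
        refine ⟨by linarith, by linarith, -1, ?_⟩
        rw [hU]; push_cast; ring
      rw [hfr, this] at h
      linarith
    · rintro ⟨-, -, -, he⟩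
      exact absurd he (Nat.not_even_iff_odd.2 ho)

theorem set_eq_Icc (α : ℝ) (h0 : 0 < α) (r k : ℕ) (hk : ⌊(r : ℝ) * α⌋ = (k : ℤ))
    (hf : Int.fract ((r : ℝ) * α) < fseq α 1) (hf1 : fseq α 1 < α) :
    {s : ℕ | ⌊(s : ℝ) * α⌋ = (k : ℤ)} = Set.Icc r (r + pq α 1) := by
  have hfe := fseq_one α
  have hfn := Int.fract_nonneg ((r : ℝ) * α)
  rw [Int.fract, hk] at hf hfn
  push_cast at hf hfn
  ext s
  simp only [Set.mem_setOf_eq, Int.floor_eq_iff, Set.mem_Icc]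
  push_cast
  constructor
  · rintro ⟨ha, hb⟩
    constructor
    · by_contra hlt
      have : (s : ℝ) + 1 ≤ r := by exact_mod_cast (not_le.1 hlt)
      nlinarith
    · by_contra hlt
      have : (r : ℝ) + pq α 1 + 1 ≤ s := by exact_mod_cast (not_le.1 hlt)
      nlinarith
  · rintro ⟨ha, hb⟩
    have ha' : (r : ℝ) ≤ s := by exact_mod_cast ha
    have hb' : (s : ℝ) ≤ r + pq α 1 := by exact_mod_cast hb
    constructor <;> nlinarith

theorem rmin_tcount_of (α : ℝ) (h0 : 0 < α) (r k : ℕ) (hk : ⌊(r : ℝ) * α⌋ = (k : ℤ))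
    (hf : Int.fract ((r : ℝ) * α) < fseq α 1) (hf1 : fseq α 1 < α) :
    rmin α k = r ∧ tcount α k = pq α 1 + 1 := by
  rw [rmin, tcount, set_eq_Icc α h0 r k hk hf hf1]
  constructor
  · exact csInf_Icc (by omega)
  · rw [← Finset.coe_Icc, Set.ncard_coe_finset, Nat.card_Icc]; omega

theorem fract_of_tcount (α : ℝ) (h0 : 0 < α) (k : ℕ) (ht : tcount α k = pq α 1 + 1) :
    Int.fract ((rmin α k : ℝ) * α) < fseq α 1 := by
  have hne : {r : ℕ | ⌊(r : ℝ) * α⌋ = (k : ℤ)}.Nonempty := by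
    apply Set.nonempty_of_ncard_ne_zero
    rw [tcount] at ht
    omega
  have hmem : ⌊(rmin α k : ℝ) * α⌋ = (k : ℤ) := Nat.sInf_mem hne
  have hmin : ∀ s ∈ {r : ℕ | ⌊(r : ℝ) * α⌋ = (k : ℤ)}, rmin α k ≤ s := fun s hs => Nat.sInf_le hs
  by_contra hge
  rw [not_lt, Int.fract, hmem, fseq_one] at hge
  push_cast at hge
  have hsub : {r : ℕ | ⌊(r : ℝ) * α⌋ = (k : ℤ)} ⊆
      ((Finset.Ico (rmin α k) (rmin α k + pq α 1) : Finset ℕ) : Set ℕ) := by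
    intro s hs
    have h1 := hmin s hs
    simp only [Finset.coe_Ico, Set.mem_Ico]
    refine ⟨h1, ?_⟩
    by_contra hlt
    have h2 : (rmin α k : ℝ) + pq α 1 ≤ s := by exact_mod_cast (not_lt.1 hlt)
    have h3 := (Int.floor_eq_iff.1 hs).2
    push_cast at h3
    nlinarith
  have := Set.ncard_le_ncard hsub (Finset.finite_toSet _)
  rw [Set.ncard_coe_finset, Nat.card_Ico] at this
  rw [tcount] at ht
  omega

/-- a positive integer `r` satisfies `r = r_{k_j}` for some `j > 0`
iff in its Ostrowski representation `c_0 = c_1 = 0` and the smallest index `h`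
with `c_h > 0` is an even number `≥ 2`. -/
theorem rkj_charac (α : ℝ) (hirr : Irrational α) (h0 : 0 < α) (h1 : α < 1)
    (r : ℕ) (hr : 0 < r) (N : ℕ) (c : ℕ → ℕ) (hOst : IsOstrowski α r N c) :
    (∃ j, 0 < j ∧ r = rmin α (kseq α j)) ↔
      (c 0 = 0 ∧ c 1 = 0 ∧ 2 ≤ sInf {h | 0 < c h} ∧ Even (sInf {h | 0 < c h})) := by
  rw [← fract_iff α hirr h0 h1 r N c hOst]
  have hf1 : fseq α 1 < α := by
    have h := fseq_succ α hirr h0 h1 0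
    rw [fseq_zero] at h
    have := (gaussIter_prop α hirr h0 h1 1).2.2
    simp only [Nat.zero_add] at h
    rw [h]
    nlinarith
  have hz := rmin_tcount_of α h0 0 0 (by simp)
    (by simpa using fseq_pos α hirr h0 h1 1) hf1
  constructor
  · rintro ⟨j, -, hj⟩
    by_cases hp : tcount α (kseq α j) = pq α 1 + 1
    · have := fract_of_tcount α h0 _ hp
      rwa [← hj] at this
    · exfalso
      have hk0 : kseq α j = 0 := by
        by_contra hk
        apply hp
        rw [kseq]
        exact Nat.nth_mem_of_ne_zero hk
      rw [hk0, hz.1] at hj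
      omega
  · intro hf
    have hk : ⌊(r : ℝ) * α⌋ = ((⌊(r : ℝ) * α⌋₊ : ℕ) : ℤ) :=
      (Int.natCast_floor_eq_floor (by positivity)).symm
    obtain ⟨hrm, htc⟩ := rmin_tcount_of α h0 r _ hk hf hf1
    obtain ⟨j, -, hj⟩ := Nat.exists_lt_card_nth_eq
      (p := fun k => tcount α k = pq α 1 + 1) htc
    refine ⟨j, ?_, ?_⟩
    · rcases Nat.eq_zero_or_pos j with h | h
      · exfalso
        rw [h, Nat.nth_zero_of_zero hz.2] at hj
        rw [← hj, hz.1] at hrm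
        omega
      · exact h
    · rw [kseq, hj, hrm]
end
end

section
/- Let α ∈ (0,1) be irrational. A positive integer r satisfies r = r_k for some k ≥ 1 if and only if either r = r_{k_j} for some j > 0, or r = r_{k_j} + c_1 q_1 + 1 for some j ≥ 0 and some integer 1 ≤ c_1 ≤ a_2. -/
open Filter Finset

noncomputable section

lemma aux_set_s4 (α : ℝ) (h0 : 0 < α) (k : ℕ) :
    {r : ℕ | ⌊(r : ℝ) * α⌋ = (k : ℤ)} =
      Set.Ico ⌈(k : ℝ) * α⁻¹⌉₊ ⌈((k + 1 : ℕ) : ℝ) * α⁻¹⌉₊ := by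
  ext r
  simp only [Set.mem_setOf_eq, Set.mem_Ico, Nat.ceil_le, Nat.lt_ceil, Int.floor_eq_iff]
  rw [← div_eq_mul_inv, ← div_eq_mul_inv, div_le_iff₀ h0, lt_div_iff₀ h0]
  push_cast
  rfl

lemma aux_pq1 (α : ℝ) : pq α 1 = ⌊α⁻¹⌋₊ := rfl

lemma aux_pq2 (α : ℝ) : pq α 2 = ⌊(Int.fract α⁻¹)⁻¹⌋₊ := rfl

lemma aux_ceil (α : ℝ) (h0 : 0 < α) (k : ℕ) :
    ⌈(k : ℝ) * α⁻¹⌉₊ = k * pq α 1 + ⌈(k : ℝ) * Int.fract α⁻¹⌉₊ := by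
  have hp : (0 : ℝ) ≤ α⁻¹ := (inv_pos.mpr h0).le
  have e : (k : ℝ) * α⁻¹ = (k : ℝ) * Int.fract α⁻¹ + ((k * pq α 1 : ℕ) : ℝ) := by
    have h2 : ((⌊α⁻¹⌋₊ : ℕ) : ℝ) = (⌊α⁻¹⌋ : ℝ) := natCast_floor_eq_intCast_floor hp
    have h3 := Int.floor_add_fract α⁻¹
    rw [aux_pq1]
    push_cast
    rw [h2]
    nth_rewrite 1 [← h3]
    ring
  rw [e, Nat.ceil_add_natCast (mul_nonneg (Nat.cast_nonneg k) (Int.fract_nonneg _))]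
  ring

lemma aux_ceil_le (x : ℝ) (hx0 : 0 < x) (k : ℕ) :
    ⌈(k : ℝ) * x⌉₊ ≤ ⌈((k + 1 : ℕ) : ℝ) * x⌉₊ := by
  apply Nat.ceil_le_ceil
  push_cast
  nlinarith

lemma aux_rmin (α : ℝ) (h0 : 0 < α) (h1 : α < 1) (hx : 0 < Int.fract α⁻¹) (k : ℕ) :
    rmin α k = k * pq α 1 + ⌈(k : ℝ) * Int.fract α⁻¹⌉₊ := by
  have ha : 1 ≤ pq α 1 := by
    rw [aux_pq1]
    apply Nat.le_floor
    simpa using (one_lt_inv₀ h0).mpr h1 |>.le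
  have hl : ⌈(k : ℝ) * α⁻¹⌉₊ < ⌈((k + 1 : ℕ) : ℝ) * α⁻¹⌉₊ := by
    rw [aux_ceil α h0, aux_ceil α h0]
    have := aux_ceil_le _ hx k
    nlinarith
  unfold rmin
  rw [aux_set_s4 α h0, csInf_Ico hl, aux_ceil α h0]

lemma aux_t (α : ℝ) (h0 : 0 < α) (hx : 0 < Int.fract α⁻¹) (k : ℕ) :
    tcount α k = pq α 1 + 1 ↔
      ⌈((k + 1 : ℕ) : ℝ) * Int.fract α⁻¹⌉₊ = ⌈(k : ℝ) * Int.fract α⁻¹⌉₊ + 1 := by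
  have h := aux_ceil_le _ hx k
  have hn (a b : ℕ) : (Set.Ico a b).ncard = b - a := by
    rw [← Finset.coe_Ico, Set.ncard_coe_finset, Nat.card_Ico]
  unfold tcount
  rw [aux_set_s4 α h0, hn, aux_ceil α h0, aux_ceil α h0, add_mul]
  omega

lemma aux_jump (x : ℝ) (m k : ℕ) (hk : (k : ℝ) * x ≤ m)
    (hm : (m : ℝ) < ((k + 1 : ℕ) : ℝ) * x) (hx1 : x < 1) (hx0 : 0 < x) :
    ⌈(k : ℝ) * x⌉₊ = m ∧ ⌈((k + 1 : ℕ) : ℝ) * x⌉₊ = m + 1 := by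
  push_cast at hm
  constructor
  · apply le_antisymm (Nat.ceil_le.mpr hk)
    by_contra! hc
    have h2 : ⌈(k : ℝ) * x⌉₊ + 1 ≤ m := hc
    have h3 : ((⌈(k : ℝ) * x⌉₊ : ℕ) : ℝ) + 1 ≤ m := by exact_mod_cast h2
    have h4 := Nat.le_ceil ((k : ℝ) * x)
    nlinarith
  · apply le_antisymm
    · apply Nat.ceil_le.mpr
      push_cast
      nlinarith
    · apply Nat.lt_ceil.mpr
      push_cast
      exact hm

/-- a positive integer `r` satisfies `r = r_k` for some `k ≥ 1` iff
either `r = r_{k_j}` for some `j > 0`, or `r = r_{k_j} + c_1 q_1 + 1` for some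
`j ≥ 0` and `1 ≤ c_1 ≤ a_2`. -/
theorem rk_charac (α : ℝ) (hirr : Irrational α) (h0 : 0 < α) (h1 : α < 1)
    (r : ℕ) (hr : 0 < r) :
    (∃ k, 1 ≤ k ∧ r = rmin α k) ↔
      ((∃ j, 0 < j ∧ r = rmin α (kseq α j)) ∨
        ∃ j c1 : ℕ, 1 ≤ c1 ∧ c1 ≤ pq α 2 ∧
          r = rmin α (kseq α j) + c1 * qden α 1 + 1) := by
  classical
  have hx0 : 0 < Int.fract α⁻¹ := by
    apply Int.fract_pos.mpr
    intro h
    exact hirr.inv.ne_int _ h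
  have hx1 : Int.fract α⁻¹ < 1 := Int.fract_lt_one _
  have hrm := aux_rmin α h0 h1 hx0
  have ht := aux_t α h0 hx0
  have hp2 := aux_pq2 α
  have hq : qden α 1 = pq α 1 := rfl
  rw [hq]
  generalize Int.fract α⁻¹ = x at *
  have ht0 : tcount α 0 = pq α 1 + 1 := by
    rw [ht]
    have := aux_jump x 0 0 (by simp) (by simpa using hx0) hx1 hx0
    rw [this.1, this.2]
  have hks (j : ℕ) : tcount α (kseq α j) = pq α 1 + 1 := by
    unfold kseq
    by_cases hf : ∀ hf : (setOf (fun k => tcount α k = pq α 1 + 1)).Finite, j < #hf.toFinset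
    · exact Nat.nth_mem j hf
    · push Not at hf
      obtain ⟨hf, hj⟩ := hf
      rw [Nat.nth_of_card_le hf hj]
      exact ht0
  have hsurj (k : ℕ) (hk : tcount α k = pq α 1 + 1) : ∃ j, kseq α j = k :=
    ⟨_, Nat.nth_count (p := fun k => tcount α k = pq α 1 + 1) hk⟩
  have hk0 : kseq α 0 = 0 := by
    have := Nat.nth_count (p := fun k => tcount α k = pq α 1 + 1) ht0
    simpa [kseq] using this
  have hmul : x⁻¹ * x = 1 := inv_mul_cancel₀ hx0.ne'
  constructor
  · rintro ⟨k, hk1, rfl⟩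
    by_cases hj : tcount α k = pq α 1 + 1
    · left
      obtain ⟨j, rfl⟩ := hsurj k hj
      refine ⟨j, ?_, rfl⟩
      rcases Nat.eq_zero_or_pos j with rfl | h
      · omega
      · exact h
    · right
      have hkx : 0 < (k : ℝ) * x := mul_pos (by exact_mod_cast hk1) hx0
      obtain ⟨m, hm⟩ : ∃ m, ⌈(k : ℝ) * x⌉₊ = m + 1 :=
        ⟨⌈(k : ℝ) * x⌉₊ - 1, by have := Nat.ceil_pos.mpr hkx; omega⟩
      have hmk : (m : ℝ) < k * x := Nat.lt_ceil.mp (by omega)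
      have hle := aux_ceil_le x hx0 k
      have hk2 : ((k + 1 : ℕ) : ℝ) * x ≤ m + 1 := by
        by_contra! hc
        apply hj
        rw [ht]
        refine ?_
        have hkm : (k : ℝ) * x ≤ ((m + 1 : ℕ) : ℝ) := hm ▸ Nat.le_ceil _
        have := aux_jump x (m + 1) k hkm (by push_cast at hc ⊢; exact hc) hx1 hx0
        rw [this.1, this.2]
      have hdn : (0 : ℝ) ≤ m / x := by positivity
      set k0 := ⌊(m : ℝ) / x⌋₊ with hk0def
      have e1 : (k0 : ℝ) * x ≤ m := (le_div_iff₀ hx0).mp (Nat.floor_le hdn)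
      have e2 : (m : ℝ) < ((k0 + 1 : ℕ) : ℝ) * x := by
        push_cast
        exact (div_lt_iff₀ hx0).mp (Nat.lt_floor_add_one _)
      have hJ := aux_jump x m k0 e1 e2 hx1 hx0
      obtain ⟨j, hjj⟩ := hsurj k0 (by rw [ht, hJ.1, hJ.2])
      have hlt : k0 < k := by
        have : (k0 : ℝ) < k := lt_of_mul_lt_mul_right (lt_of_le_of_lt e1 hmk) hx0.le
        exact_mod_cast this
      obtain ⟨c, rfl⟩ := Nat.exists_eq_add_of_lt hlt
      refine ⟨j, c + 1, by omega, ?_, ?_⟩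
      · rw [hp2]
        apply Nat.le_floor
        push_cast at e2 hk2 ⊢
        by_contra! hc
        nlinarith
      · rw [hjj, hrm, hrm, hm, hJ.1]
        ring
  · rintro (⟨j, hj, rfl⟩ | ⟨j, c, hc1, hc2, rfl⟩)
    · refine ⟨kseq α j, ?_, rfl⟩
      by_contra! hc
      have : kseq α j = 0 := by omega
      rw [this, hrm] at hr
      simp at hr
    · refine ⟨kseq α j + c, by omega, ?_⟩
      have h := (ht _).mp (hks j)
      generalize kseq α j = k at *
      rw [hrm, hrm]
      have hcx : (c : ℝ) * x ≤ 1 := by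
        rw [hp2] at hc2
        have h3 : (c : ℝ) ≤ x⁻¹ := le_trans (by exact_mod_cast hc2)
          (Nat.floor_le (inv_pos.mpr hx0).le)
        nlinarith
      have hc : ⌈((k + c : ℕ) : ℝ) * x⌉₊ = ⌈(k : ℝ) * x⌉₊ + 1 := by
        apply le_antisymm
        · apply Nat.ceil_le.mpr
          have := Nat.le_ceil ((k : ℝ) * x)
          push_cast
          nlinarith
        · rw [← h]
          apply Nat.ceil_le_ceil
          apply mul_le_mul_of_nonneg_right _ hx0.le
          exact_mod_cast (by omega : k + 1 ≤ k + c)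
      rw [hc]
      ring
end
end

section
/- Let α ∈ (0,1) be irrational with a_1 odd. Then for every r ≥ 0, S_r(α) = S_{i(r)}(−ᾱ_1) − 1 + S̃(r), where S_n(−ᾱ_1) := Σ_{r=0}^{n} s({−r ᾱ_1}); moreover S_n(−ᾱ_1) − 1 = −(S_n(ᾱ_1) − 1) for all n ≥ 0. -/
open Filter Finset

noncomputable section

/-! ### Auxiliary lemmas -/

lemma sfun_of_eq {x t : ℝ} (z : ℤ) (hx : x = z + t) (ht0 : 0 ≤ t) (ht1 : t < 1) :
    sfun x = if t < 1 / 2 then 1 else -1 := by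
  have : Int.fract x = t := by
    rw [hx, Int.fract_intCast_add, Int.fract_eq_self.mpr ⟨ht0, ht1⟩]
  rw [sfun, this]

lemma sum_pm (f : ℕ → ℝ) (m n : ℕ) (hmn : m ≤ n) (h1 : ∀ u < m, f u = 1)
    (h2 : ∀ u, m ≤ u → u < n → f u = -1) :
    ∑ u ∈ Finset.range n, f u = 2 * m - n := by
  induction n, hmn using Nat.le_induction with
  | base =>
    rw [Finset.sum_congr rfl (fun u hu => h1 u (Finset.mem_range.mp hu))]
    simp; ring
  | succ n hn ih =>
    rw [Finset.sum_range_succ, ih (fun u h h' => h2 u h (by omega)), h2 n hn (by omega)]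
    push_cast; ring

lemma sfun_neg_irr {x : ℝ} (hx : Irrational x) : sfun (-x) = - sfun x := by
  have h0 : Int.fract x ≠ 0 := by
    intro h
    have := Int.floor_add_fract x
    rw [h, add_zero] at this
    exact hx ⟨(⌊x⌋ : ℚ), by push_cast; exact this⟩
  have h2 : Int.fract x ≠ 1 / 2 := by
    intro h
    have := Int.floor_add_fract x
    rw [h] at this
    exact hx ⟨(⌊x⌋ : ℚ) + 1 / 2, by push_cast; exact this⟩
  unfold sfun
  rw [Int.fract_neg h0]
  rcases lt_or_gt_of_ne h2 with h | h
  · rw [if_neg (by linarith), if_pos h]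
  · rw [if_pos (by linarith), if_neg (by linarith)]; norm_num

lemma Ssum_zero (γ : ℝ) : Ssum γ 0 = 1 := by
  simp [Ssum, Sgen, sfun]

lemma Ssum_succ (γ : ℝ) (n : ℕ) :
    Ssum γ (n + 1) = Ssum γ n + sfun (((n + 1 : ℕ) : ℝ) * γ) := by
  simp only [Ssum, Sgen, add_zero]
  rw [Finset.sum_range_succ]

lemma Ssum_neg {γ : ℝ} (hγ : Irrational γ) (n : ℕ) :
    Ssum (-γ) n - 1 = -(Ssum γ n - 1) := by
  induction n with
  | zero => simp [Ssum_zero]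
  | succ n ih =>
    rw [Ssum_succ, Ssum_succ]
    have : sfun (((n + 1 : ℕ) : ℝ) * -γ) = - sfun (((n + 1 : ℕ) : ℝ) * γ) := by
      rw [mul_neg]
      exact sfun_neg_irr (hγ.natCast_mul (by omega))
    rw [this]; linarith

/-- `⌈k β⌉`. -/
def cc (β : ℝ) (k : ℕ) : ℕ := ⌈(k : ℝ) * β⌉₊

lemma cc_zero (β : ℝ) : cc β 0 = 0 := by simp [cc]

lemma cc_mono {β : ℝ} (hβ : 0 < β) : Monotone (cc β) := by
  intro m n h
  apply Nat.ceil_mono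
  gcongr

lemma cc_le {β : ℝ} (k : ℕ) : (k : ℝ) * β ≤ cc β k := Nat.le_ceil _

lemma cc_lt {β : ℝ} (hβ : 0 < β) (k : ℕ) : (cc β k : ℝ) < k * β + 1 :=
  Nat.ceil_lt_add_one (by positivity)

lemma cc_succ_le {β : ℝ} (hβ : 0 < β) (hβ1 : β < 1) (k : ℕ) : cc β (k + 1) ≤ cc β k + 1 := by
  apply Nat.ceil_le.mpr
  have := cc_le (β := β) k
  push_cast
  linarith

lemma cc_le_self {β : ℝ} (hβ1 : β < 1) (k : ℕ) : cc β k ≤ k := by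
  apply Nat.ceil_le.mpr
  have : (0 : ℝ) ≤ k := by positivity
  nlinarith

/-- `r_k = k a + ⌈k β⌉`. -/
def RR (a : ℕ) (β : ℝ) (k : ℕ) : ℕ := k * a + cc β k

lemma level_set {α β : ℝ} {a : ℕ} (hα : 0 < α) (hβ : 0 < β)
    (hab : α * (a + β) = 1) (k : ℕ) :
    {r : ℕ | ⌊(r : ℝ) * α⌋ = (k : ℤ)} = Set.Ico (RR a β k) (RR a β (k + 1)) := by
  have key : ∀ (r k : ℕ), RR a β k ≤ r ↔ (k : ℝ) ≤ r * α := by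
    intro r k
    have e : RR a β k = ⌈(k : ℝ) * (a + β)⌉₊ := by
      rw [RR, cc, mul_add, add_comm, ← Nat.ceil_add_natCast (by positivity)]
      congr 1; push_cast; ring
    rw [e, Nat.ceil_le]
    have e2 : (k : ℝ) = (k * (a + β)) * α := by linear_combination (-(k : ℝ)) * hab
    conv_rhs => rw [e2]
    exact (mul_le_mul_iff_left₀ hα).symm
  ext r
  simp only [Set.mem_setOf_eq, Set.mem_Ico, ← not_le, key]
  rw [Int.floor_eq_iff]
  push_cast
  simp

lemma RR_lt {a : ℕ} {β : ℝ} (ha : 0 < a) (hβ : 0 < β) (k : ℕ) :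
    RR a β k < RR a β (k + 1) := by
  have := cc_mono hβ (Nat.le_succ k)
  simp only [RR, add_mul]
  simp only [Nat.succ_eq_add_one] at this
  omega

lemma rmin_eq {α β : ℝ} {a : ℕ} (hα : 0 < α) (ha : 0 < a) (hβ : 0 < β)
    (hab : α * (a + β) = 1) (k : ℕ) : rmin α k = RR a β k := by
  rw [rmin, level_set hα hβ hab]
  exact csInf_Ico (RR_lt ha hβ k)

lemma tcount_eq_s10 {α β : ℝ} {a : ℕ} (hα : 0 < α) (hβ : 0 < β)
    (hab : α * (a + β) = 1) (k : ℕ) : tcount α k = RR a β (k + 1) - RR a β k := by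
  rw [tcount, level_set hα hβ hab, Set.ncard_eq_toFinset_card', Set.toFinset_Ico, Nat.card_Ico]

lemma special_iff {α β : ℝ} {a : ℕ} (hα : 0 < α) (hβ : 0 < β)
    (hab : α * (a + β) = 1) (k : ℕ) :
    tcount α k = a + 1 ↔ cc β (k + 1) = cc β k + 1 := by
  rw [tcount_eq_s10 hα hβ hab]
  have := cc_mono hβ (Nat.le_succ k)
  simp only [RR, add_mul]
  simp only [Nat.succ_eq_add_one] at this
  omega

lemma count_eq {β : ℝ} (hβ : 0 < β) (hβ1 : β < 1) (P : ℕ → Prop) [DecidablePred P]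
    (hP : ∀ k, P k ↔ cc β (k + 1) = cc β k + 1) (k : ℕ) : Nat.count P k = cc β k := by
  induction k with
  | zero => simp [cc_zero]
  | succ k ih =>
    rw [Nat.count_succ, ih]
    have h1 := cc_mono hβ (Nat.le_succ k)
    have h2 := cc_succ_le hβ hβ1 k
    simp only [Nat.succ_eq_add_one] at h1
    split_ifs with h
    · exact ((hP k).mp h).symm
    · rw [hP] at h; omega

lemma inf_special {β : ℝ} (hβ : 0 < β) (hβ1 : β < 1) (P : ℕ → Prop)
    (hP : ∀ k, P k ↔ cc β (k + 1) = cc β k + 1) : (setOf P).Infinite := by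
  intro hfin
  obtain ⟨N, hN⟩ := hfin.bddAbove
  have hc : ∀ n, cc β (N + 1 + n) = cc β (N + 1) := by
    intro n
    induction n with
    | zero => rfl
    | succ n ih =>
      have h1 := cc_mono hβ (Nat.le_succ (N + 1 + n))
      have h2 := cc_succ_le hβ hβ1 (N + 1 + n)
      have h3 : ¬ P (N + 1 + n) := fun h => by
        have := hN h; omega
      rw [hP] at h3
      simp only [Nat.succ_eq_add_one] at h1
      rw [← add_assoc]; omega
  obtain ⟨n, hn⟩ := exists_nat_gt ((cc β (N + 1) : ℝ) / β)
  rw [div_lt_iff₀ hβ] at hn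
  have := cc_le (β := β) (N + 1 + n)
  rw [hc] at this
  push_cast at this
  nlinarith [(Nat.cast_nonneg N : (0 : ℝ) ≤ N)]

/-- Sum over a block. -/
lemma block_point {α β : ℝ} {a b : ℕ} (hα : 0 < α) (hβ : 0 < β)
    (hab : α * (a + β) = 1) (hb : a = 2 * b + 1) (k u : ℕ)
    (hu : RR a β k + u < RR a β (k + 1)) :
    sfun (((RR a β k + u : ℕ) : ℝ) * α) =
      if (cc β k : ℝ) - k * β + u < b + (1 + β) / 2 then 1 else -1 := by
  have hy0 := cc_le (β := β) k
  have hmem : RR a β k + u ∈ {r : ℕ | ⌊(r : ℝ) * α⌋ = (k : ℤ)} := by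
    rw [level_set hα hβ hab]; exact ⟨by omega, hu⟩
  have hfl := Int.floor_eq_iff.mp hmem
  have e : ((RR a β k + u : ℕ) : ℝ) * α = (k : ℤ) + ((cc β k : ℝ) - k * β + u) * α := by
    simp only [RR]; push_cast
    linear_combination (k : ℝ) * hab
  rw [e] at hfl
  rw [sfun_of_eq (k : ℤ) e (by linarith [hfl.1]) (by linarith [hfl.2])]
  have : ((cc β k : ℝ) - k * β + u) * α < 1 / 2 ↔
      (cc β k : ℝ) - k * β + u < b + (1 + β) / 2 := by
    have h : (1 / 2 : ℝ) = (b + (1 + β) / 2) * α := by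
      rw [hb] at hab; push_cast at hab; linear_combination (-1 / 2) * hab
    rw [h]
    exact mul_lt_mul_iff_left₀ hα
  simp only [this]

lemma block_sum {α β : ℝ} {a b : ℕ} (hα : 0 < α) (hβ : 0 < β) (hβ1 : β < 1)
    (hab : α * (a + β) = 1) (hb : a = 2 * b + 1) (k : ℕ) :
    ∑ i ∈ Finset.range (RR a β k), sfun ((i : ℝ) * α) =
      Ssum (-(β / (1 - β))) (k - cc β k) - 1 := by
  induction k with
  | zero => simp [RR, cc_zero, Ssum_zero]
  | succ k ih =>
    have hm := cc_mono hβ (Nat.le_succ k)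
    have h2 := cc_succ_le hβ hβ1 k
    have hk := cc_le_self hβ1 k
    have hy0 := cc_le (β := β) k
    have hy1 := cc_lt hβ k
    simp only [Nat.succ_eq_add_one] at hm
    set t := a + (cc β (k + 1) - cc β k) with ht
    have hR : RR a β (k + 1) = RR a β k + t := by
      simp only [RR, add_mul]; omega
    rw [hR, Finset.sum_range_add, ih]
    have hpt : ∀ u < t, sfun (((RR a β k + u : ℕ) : ℝ) * α) =
        if (cc β k : ℝ) - k * β + u < b + (1 + β) / 2 then 1 else -1 :=
      fun u hu => block_point hα hβ hab hb k u (by omega)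
    have hcast : ∀ u v : ℕ, u < v → (u : ℝ) + 1 ≤ v := fun u v h => by exact_mod_cast h
    rcases (by omega : cc β (k + 1) = cc β k + 1 ∨ cc β (k + 1) = cc β k) with hs | hs
    · -- special block
      have hlt : (cc β k : ℝ) - k * β < β := by
        have := cc_lt hβ (k + 1)
        rw [hs] at this; push_cast at this; linarith
      rw [sum_pm _ (b + 1) t (by omega)]
      · rw [hs, show k + 1 - (cc β k + 1) = k - cc β k by omega]
        have : (t : ℝ) = 2 * b + 2 := by
          have : t = 2 * b + 2 := by omega
          rw [this]; push_cast; ring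
        rw [this]; push_cast; ring
      · intro u hu
        have := hcast _ _ hu
        push_cast at this
        rw [hpt u (by omega), if_pos (by linarith)]
      · intro u hu hu'
        have : ((b : ℝ) + 1) ≤ u := by exact_mod_cast hu
        rw [hpt u hu', if_neg (by linarith)]
    · have hge : β ≤ (cc β k : ℝ) - k * β := by
        have := cc_le (β := β) (k + 1)
        rw [hs] at this; push_cast at this; linarith
      have hta : t = 2 * b + 1 := by omega
      rw [hs, show k + 1 - cc β k = (k - cc β k) + 1 by omega, Ssum_succ]
      have h1b : 0 < 1 - β := by linarith
      have e : (((k - cc β k) + 1 : ℕ) : ℝ) * (-(β / (1 - β))) =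
          ((-(cc β k : ℤ) : ℤ) : ℝ) + ((cc β k : ℝ) - k * β - β) / (1 - β) := by
        push_cast [Nat.cast_sub hk]
        field_simp
        ring
      rw [sfun_of_eq _ e (div_nonneg (by linarith) h1b.le)
        (by rw [div_lt_one h1b]; linarith)]
      have hiff : ((cc β k : ℝ) - k * β - β) / (1 - β) < 1 / 2 ↔
          (cc β k : ℝ) - k * β < (1 + β) / 2 := by
        rw [div_lt_iff₀ h1b]
        constructor <;> intro h <;> linarith
      simp only [hiff]
      split_ifs with hc
      · rw [sum_pm _ (b + 1) t (by omega)]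
        · rw [hta]; push_cast; ring
        · intro u hu
          have := hcast _ _ hu
          push_cast at this
          rw [hpt u (by omega), if_pos (by linarith)]
        · intro u hu hu'
          have : ((b : ℝ) + 1) ≤ u := by exact_mod_cast hu
          rw [hpt u hu', if_neg (by linarith)]
      · rw [sum_pm _ b t (by omega)]
        · rw [hta]; push_cast; ring
        · intro u hu
          have := hcast _ _ hu
          rw [hpt u (by omega), if_pos (by linarith)]
        · intro u hu hu'
          have : (b : ℝ) ≤ u := by exact_mod_cast hu
          rw [hpt u hu', if_neg (by linarith)]

/-- if `a_1` is odd then, with `r = r_{k_j} + R₁ q₁ + R₀`,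
`S_r(α) = S_{i(r)}(-ᾱ_1) - 1 + S̃(r)`; moreover
`S_n(-ᾱ_1) - 1 = -(S_n(ᾱ_1) - 1)` for all `n ≥ 0`. -/
theorem renorm_odd (α : ℝ) (hirr : Irrational α) (h0 : 0 < α) (h1 : α < 1)
    (hOdd : Odd (pq α 1)) (r j R1 R0 : ℕ)
    (hdec : r = rmin α (kseq α j) + R1 * qden α 1 + R0)
    (hlt : R1 * qden α 1 + R0 < rmin α (kseq α (j + 1)) - rmin α (kseq α j))
    (hR1 : R1 ≤ pq α 2 + 1) (hR0 : R0 < qden α 1) :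
    Ssum α r = Ssum (-(abar α)) (ifun α j R1) - 1 + Stil α r R1 R0 ∧
    ∀ n : ℕ, Ssum (-(abar α)) n - 1 = -(Ssum (abar α) n - 1) := by
  set β := gaussIter α 1 with hβdef
  set a := pq α 1 with hadef
  have hβ' : β = Int.fract α⁻¹ := by simp [hβdef, gaussIter, gaussMap]
  have ha' : a = ⌊α⁻¹⌋₊ := by simp [hadef, pq, gaussIter]
  have hinv : Irrational α⁻¹ := irrational_inv_iff.mpr hirr
  have hsum : (a : ℝ) + β = α⁻¹ := by
    rw [ha', hβ', natCast_floor_eq_intCast_floor (by positivity)]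
    exact Int.floor_add_fract _
  have hβe : β = α⁻¹ - (a : ℝ) := by linarith
  have hβirr : Irrational β := by
    rw [hβe]; exact hinv.sub_natCast a
  have hβ : 0 < β := by
    rcases (hβ' ▸ Int.fract_nonneg α⁻¹ : 0 ≤ β).lt_or_eq with h | h
    · exact h
    · exact absurd h.symm hβirr.ne_zero
  have hβ1 : β < 1 := hβ' ▸ Int.fract_lt_one _
  have hab : α * (a + β) = 1 := by rw [hsum]; exact mul_inv_cancel₀ h0.ne'
  obtain ⟨b, hb⟩ := hOdd
  have ha : 0 < a := by omega
  have habar : abar α = β / (1 - β) := rfl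
  have hairr : Irrational (abar α) := by
    have e : abar α = (1 - β)⁻¹ - (1 : ℕ) := by
      rw [habar]
      have : 1 - β ≠ 0 := by linarith
      field_simp; push_cast; ring
    rw [e]
    apply Irrational.sub_natCast
    apply irrational_inv_iff.mpr
    simpa using hβirr.natCast_sub 1
  refine ⟨?_, fun n => Ssum_neg hairr n⟩
  have hP : ∀ k, tcount α k = pq α 1 + 1 ↔ cc β (k + 1) = cc β k + 1 :=
    fun k => special_iff h0 hβ hab k
  have hinf := inf_special hβ hβ1 (fun k => tcount α k = pq α 1 + 1) hP
  have hcK : ∀ j, cc β (kseq α j) = j := by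
    intro j
    rw [← count_eq hβ hβ1 (fun k => tcount α k = pq α 1 + 1) hP]
    exact Nat.count_nth_of_infinite hinf j
  have hcK1 : ∀ j, cc β (kseq α j + 1) = j + 1 := by
    intro j
    have := (hP _).mp (Nat.nth_mem_of_infinite hinf j)
    rw [← kseq, hcK] at this
    exact this
  have hq : qden α 1 = a := rfl
  rw [hq] at hdec hlt hR0
  rw [rmin_eq h0 ha hβ hab] at hdec
  rw [rmin_eq h0 ha hβ hab, rmin_eq h0 ha hβ hab] at hlt
  have hS : Ssum α r = ∑ i ∈ Finset.range (r + 1), sfun ((i : ℝ) * α) := by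
    simp [Ssum, Sgen]
  have hIcc : ∀ m, m ≤ r + 1 → ∑ i ∈ Finset.range (r + 1), sfun ((i : ℝ) * α) =
      ∑ i ∈ Finset.range m, sfun ((i : ℝ) * α) + ∑ i ∈ Finset.Icc m r, sfun ((i : ℝ) * α) := by
    intro m hm
    rw [← Finset.sum_range_add_sum_Ico _ hm]
    rfl
  have hkj := hcK j
  have hkj1 := hcK1 j
  have hkj2 := hcK (j + 1)
  have hbs := fun k => block_sum (a := a) (b := b) h0 hβ hβ1 hab hb k
  rw [hS, habar]
  generalize kseq α (j + 1) = K' at *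
  unfold ifun
  generalize kseq α j = K at *
  rcases Nat.eq_zero_or_pos R1 with hz | hpos
  · subst hz
    have hr : r = RR a β K + R0 := by omega
    rw [hIcc (RR a β K) (by omega), hbs, hkj]
    simp only [Stil]
    split_ifs with h
    · subst h
      rw [hr]; simp
    · rw [show r - R0 = RR a β K by omega]; simp
  · have hKK : K + R1 ≤ K' := by
      by_contra hcon
      have h3 : RR a β K' - RR a β K ≤ R1 * a := by
        have : K' ≤ K + (R1 - 1) := by omega
        have h4 : K' * a ≤ (K + (R1 - 1)) * a := Nat.mul_le_mul_right a this
        obtain ⟨R, rfl⟩ : ∃ R, R1 = R + 1 := ⟨R1 - 1, by omega⟩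
        simp only [RR, hkj, hkj2]
        simp only [Nat.add_sub_cancel, add_mul] at h4 ⊢
        omega
      omega
    have hck : cc β (K + R1) = j + 1 := by
      have h3 := cc_mono hβ hKK
      have h4 := cc_mono hβ (show K + 1 ≤ K + R1 by omega)
      omega
    have hRk : RR a β (K + R1) = RR a β K + R1 * a + 1 := by
      simp only [RR, hkj, hck, add_mul]; omega
    have hKj : j ≤ K := by rw [← hkj]; exact cc_le_self hβ1 K
    rw [hIcc (RR a β (K + R1)) (by omega), hbs, hck,
      show K + R1 - (j + 1) = K - j + (R1 - 1) by omega]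
    simp only [Stil]
    rw [if_neg (by omega : ¬ R1 = 0), if_neg (by omega : ¬ R1 = 0)]
    split_ifs with h
    · subst h
      rw [Finset.Icc_eq_empty (by omega)]; simp
    · rw [show r - R0 + 1 = RR a β (K + R1) by omega]
end
end

section
/- Let α ∈ (0,1) be irrational. For all β ∈ [0, 1/2) and all n ≥ 1, S_{n−1}(α, β) = S_{n−1}(α) + R_{n−1}(α, β), where R_{n−1}(α, β) = 2[ d_n(α, 1/2 − β) − d_n(α, 1 − β) − d_n(α, 1/2) ]. -/
open Filter Finset

noncomputable section

/-- Termwise identity behind `Sgen_decomp`. -/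
theorem sfun_shift (x β : ℝ) (hb0 : 0 ≤ β) (hb1 : β < 1 / 2) :
    sfun (x + β) = sfun (x + 0) + 2 * ((if Int.fract x < 1 / 2 - β then (1 : ℝ) else 0)
      - (if Int.fract x < 1 - β then (1 : ℝ) else 0)
      - (if Int.fract x < 1 / 2 then (1 : ℝ) else 0) + 1) := by
  have hx0 := Int.fract_nonneg x
  have hx1 := Int.fract_lt_one x
  have hx := Int.floor_add_fract x
  rw [add_zero]
  unfold sfun
  by_cases hc : Int.fract x < 1 - β
  · have hf : Int.fract (x + β) = Int.fract x + β := by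
      rw [Int.fract_eq_iff]
      refine ⟨by linarith, by linarith, ⌊x⌋, ?_⟩
      linarith
    rw [hf]
    split_ifs <;> first | (exfalso; linarith) | norm_num
  · have hf : Int.fract (x + β) = Int.fract x + β - 1 := by
      rw [Int.fract_eq_iff]
      refine ⟨by linarith, by linarith, ⌊x⌋ + 1, ?_⟩
      push_cast
      linarith
    rw [hf]
    split_ifs <;> first | (exfalso; linarith) | norm_num

/-- for all `β ∈ [0, 1/2)` and `n ≥ 1`,
`S_{n-1}(α, β) = S_{n-1}(α) + 2[d_n(α, 1/2 - β) - d_n(α, 1 - β) - d_n(α, 1/2)]`. -/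
theorem Sgen_decomp (α : ℝ) (hirr : Irrational α) (h0 : 0 < α) (h1 : α < 1)
    (β : ℝ) (hβ : β ∈ Set.Ico (0 : ℝ) (1 / 2)) (n : ℕ) (hn : 1 ≤ n) :
    Sgen α β (n - 1) = Ssum α (n - 1)
      + 2 * (ddisc α (1 / 2 - β) n - ddisc α (1 - β) n - ddisc α (1 / 2) n) := by
  obtain ⟨m, rfl⟩ : ∃ m, n = m + 1 := ⟨n - 1, by omega⟩
  simp only [Nat.add_sub_cancel, Ssum, Sgen, ddisc]
  rw [Finset.sum_congr rfl (fun (r : ℕ) _ => sfun_shift ((r : ℝ) * α) β hβ.1 hβ.2)]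
  rw [Finset.sum_add_distrib, ← Finset.mul_sum, Finset.sum_add_distrib,
    Finset.sum_sub_distrib, Finset.sum_sub_distrib]
  simp only [Finset.sum_const, Finset.card_range, nsmul_eq_mul]
  ring
end
end
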